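/- Let d ≥ 1 and T > 0, let ν be a compactly supported Borel probability measure on ℝ^d, and let g, r : [0,T] → ℝ be continuously differentiable with r(t) > 0 for all t. Define ρ(t,x) = (2π r(t)²)^(−d/2) ∫ exp(−‖x − g(t)·x*‖²/(2r(t)²)) dν(x*), the posterior mean m(t,x) = (∫ x* exp(−‖x − g(t)·x*‖²/(2r(t)²)) dν(x*)) / (∫ exp(−‖x − g(t)·x*‖²/(2r(t)²)) dν(x*)), the score s(t,x) = ∇_x log ρ(t,x), and the drift b(t,x) = ġ(t)·m(t,x) − r(t)·ṙ(t)·s(t,x). Then ρ is continuously differentiable in t, b(t,·)·ρ(t,·) is continuously differentiable in x, and the continuity equation ∂_t ρ(t,x) + div_x( b(t,·) ρ(t,·) )(x) = 0 holds for every (t,x) ∈ [0,T] × ℝ^d. -/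

import Mathlib

open MeasureTheory Real
open scoped RealInnerProductSpace

/-- The divergence of a vector field `F : ℝ^d → ℝ^d`. -/
noncomputable def diverg {d : ℕ} (F : EuclideanSpace ℝ (Fin d) → EuclideanSpace ℝ (Fin d))
    (x : EuclideanSpace ℝ (Fin d)) : ℝ :=
  ∑ i, fderiv ℝ F x (EuclideanSpace.single i 1) i


section helpers

variable {d : ℕ} {ν : Measure (EuclideanSpace ℝ (Fin d))} [IsProbabilityMeasure ν]
  {G : Type*} [NormedAddCommGroup G] [NormedSpace ℝ G] [CompleteSpace G]
  {E : Type*} [NormedAddCommGroup E] [NormedSpace ℝ E] [FiniteDimensional ℝ E]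

theorem aux_integrable (hν : ∃ K : Set (EuclideanSpace ℝ (Fin d)), IsCompact K ∧ ν Kᶜ = 0)
    {f : EuclideanSpace ℝ (Fin d) → G} (hf : Continuous f) : Integrable f ν := by
  obtain ⟨K, hK, h0⟩ := hν
  have h : ν.restrict K = ν := Measure.restrict_eq_self_of_ae_mem (by
    rw [ae_iff]; exact h0)
  have := hf.continuousOn.integrableOn_compact (μ := ν) hK
  rwa [IntegrableOn, h] at this

theorem aux_param (hν : ∃ K : Set (EuclideanSpace ℝ (Fin d)), IsCompact K ∧ ν Kᶜ = 0)
    {f : E → EuclideanSpace ℝ (Fin d) → G} (hf : ContDiff ℝ 1 (Function.uncurry f)) :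
    (∀ e, HasFDerivAt (fun e => ∫ x, f e x ∂ν) (∫ x, fderiv ℝ (fun y => f y x) e ∂ν) e) ∧
    ContDiff ℝ 1 (fun e => ∫ x, f e x ∂ν) ∧
    (∀ e, Integrable (fun x => fderiv ℝ (fun y => f y x) e) ν) := by
  have hf2 : Continuous (fun p : E × EuclideanSpace ℝ (Fin d) =>
      fderiv ℝ (fun y => f y p.2) p.1) := by
    refine Continuous.fderiv_one (f := fun (p : E × EuclideanSpace ℝ (Fin d)) y => f y p.2)
      (g := fun p => p.1) ?_ continuous_fst
    exact hf.comp (contDiff_snd.prodMk (contDiff_snd.comp contDiff_fst))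
  have hI : ∀ e, Integrable (fun x => fderiv ℝ (fun y => f y x) e) ν := fun e =>
    aux_integrable hν (hf2.comp (by fun_prop : Continuous fun x => (e, x)))
  have hfc : ∀ e, Continuous (f e) := fun e =>
    hf.continuous.comp (by fun_prop : Continuous fun x => (e, x))
  have hν' := hν
  obtain ⟨K, hK, h0⟩ := hν'
  have hae : ∀ᵐ x ∂ν, x ∈ K := by rw [ae_iff]; exact h0
  have h : ν.restrict K = ν := Measure.restrict_eq_self_of_ae_mem hae
  have hD : ∀ e, HasFDerivAt (fun e => ∫ x, f e x ∂ν)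
      (∫ x, fderiv ℝ (fun y => f y x) e ∂ν) e := by
    intro e
    have : ProperSpace E := FiniteDimensional.proper_real E
    obtain ⟨M, hM⟩ := ((isCompact_closedBall e 1).prod hK).bddAbove_image hf2.norm.continuousOn
    refine hasFDerivAt_integral_of_dominated_of_fderiv_le (bound := fun _ => M)
      (F' := fun e x => fderiv ℝ (fun y => f y x) e)
      (Metric.closedBall_mem_nhds e one_pos) (Filter.Eventually.of_forall fun y =>
        (hfc y).aestronglyMeasurable) (aux_integrable hν (hfc e)) (hI e).aestronglyMeasurable
      ?_ (integrable_const _) ?_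
    · filter_upwards [hae] with x hx y hy
      exact hM ⟨(y, x), ⟨hy, hx⟩, rfl⟩
    · refine Filter.Eventually.of_forall fun x y _ => ?_
      refine DifferentiableAt.hasFDerivAt ?_
      exact ((hf.comp (by fun_prop : ContDiff ℝ 1 fun y => (y, x))).differentiable one_ne_zero) y
  refine ⟨hD, ?_, hI⟩
  rw [contDiff_one_iff_fderiv]
  refine ⟨fun e => (hD e).differentiableAt, ?_⟩
  have : fderiv ℝ (fun e => ∫ x, f e x ∂ν) = fun e => ∫ x in K, fderiv ℝ (fun y => f y x) e ∂ν := by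
    ext1 e
    rw [(hD e).fderiv, h]
  rw [this]
  exact continuous_parametric_integral_of_continuous (f := fun e x => fderiv ℝ (fun y => f y x) e)
    hf2 hK

theorem aux_k (R γ : ℝ) (x' y : EuclideanSpace ℝ (Fin d)) :
    HasFDerivAt (fun y => exp (-‖y - γ • x'‖ ^ 2 / (2 * R ^ 2)))
      (-(exp (-‖y - γ • x'‖ ^ 2 / (2 * R ^ 2)) / R ^ 2) • innerSL ℝ (y - γ • x')) y := by
  have h1 : HasFDerivAt (fun y => y - γ • x') (ContinuousLinearMap.id ℝ _) y :=
    (hasFDerivAt_id y).sub_const _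
  have h2 := ((h1.norm_sq.neg.mul_const ((2 * R ^ 2)⁻¹)).exp)
  simp only [← div_eq_mul_inv] at h2
  refine h2.congr_fderiv ?_
  ext v
  simp
  ring

/-- time derivative of the kernel -/
theorem aux_kt (T : ℝ) (x x' : EuclideanSpace ℝ (Fin d)) (g r : ℝ → ℝ) (g' r' t : ℝ)
    (hg : HasDerivWithinAt g g' (Set.Icc 0 T) t)
    (hr : HasDerivWithinAt r r' (Set.Icc 0 T) t) (hr0 : 0 < r t) :
    HasDerivWithinAt (fun t => exp (-‖x - g t • x'‖ ^ 2 / (2 * r t ^ 2)))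
      (exp (-‖x - g t • x'‖ ^ 2 / (2 * r t ^ 2)) *
        (g' * ⟪x - g t • x', x'⟫ / r t ^ 2 + r' * ‖x - g t • x'‖ ^ 2 / r t ^ 3))
      (Set.Icc 0 T) t := by
  have h1 : HasDerivWithinAt (fun t => x - g t • x') (-(g' • x')) (Set.Icc 0 T) t :=
    (hg.smul_const x').const_sub _
  have h2 := (h1.norm_sq.neg.div ((hr.pow 2).const_mul 2)
    (ne_of_gt (by show 0 < 2 * r t ^ 2; positivity))).exp
  refine h2.congr_deriv ?_
  simp [inner_neg_right, inner_smul_right]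
  field_simp

theorem aux_contDiffOn {T : ℝ} (hT : 0 < T) {g gdot : ℝ → ℝ}
    (hg : ∀ t ∈ Set.Icc (0 : ℝ) T, HasDerivWithinAt g (gdot t) (Set.Icc 0 T) t)
    (hgdot : ContinuousOn gdot (Set.Icc 0 T)) : ContDiffOn ℝ 1 g (Set.Icc 0 T) := by
  rw [contDiffOn_one_iff_derivWithin (uniqueDiffOn_Icc hT)]
  refine ⟨fun t ht => (hg t ht).differentiableWithinAt, hgdot.congr fun t ht => ?_⟩
  exact (hg t ht).derivWithin (uniqueDiffOn_Icc hT t ht)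

theorem aux_F (x : EuclideanSpace ℝ (Fin d)) :
    ContDiff ℝ 1 (Function.uncurry fun (p : ℝ × ℝ) (x' : EuclideanSpace ℝ (Fin d)) =>
      exp (-‖x - p.1 • x'‖ ^ 2 * p.2)) := by
  have : ContDiff ℝ 1 (fun q : (ℝ × ℝ) × EuclideanSpace ℝ (Fin d) => ‖x - q.1.1 • q.2‖ ^ 2) :=
    ContDiff.norm_sq ℝ (by fun_prop)
  unfold Function.uncurry
  fun_prop

theorem aux_F' (x x' : EuclideanSpace ℝ (Fin d)) :
    ContDiff ℝ 1 (fun p : ℝ × ℝ => exp (-‖x - p.1 • x'‖ ^ 2 * p.2)) := by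
  have : ContDiff ℝ 1 (fun q : (ℝ × ℝ) => ‖x - q.1 • x'‖ ^ 2) :=
    ContDiff.norm_sq ℝ (by fun_prop)
  fun_prop

/-- time regularity and time derivative of the unnormalized density -/
theorem aux_time (hν : ∃ K : Set (EuclideanSpace ℝ (Fin d)), IsCompact K ∧ ν Kᶜ = 0)
    {T : ℝ} (hT : 0 < T) {g r gdot rdot : ℝ → ℝ}
    (hg : ∀ t ∈ Set.Icc (0 : ℝ) T, HasDerivWithinAt g (gdot t) (Set.Icc 0 T) t)
    (hr : ∀ t ∈ Set.Icc (0 : ℝ) T, HasDerivWithinAt r (rdot t) (Set.Icc 0 T) t)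
    (hgdot : ContinuousOn gdot (Set.Icc 0 T)) (hrdot : ContinuousOn rdot (Set.Icc 0 T))
    (hrpos : ∀ t ∈ Set.Icc (0 : ℝ) T, 0 < r t) (x : EuclideanSpace ℝ (Fin d)) :
    ContDiffOn ℝ 1 (fun t => ∫ x', exp (-‖x - g t • x'‖ ^ 2 / (2 * r t ^ 2)) ∂ν) (Set.Icc 0 T) ∧
    ∀ t ∈ Set.Icc (0 : ℝ) T,
      HasDerivWithinAt (fun t => ∫ x', exp (-‖x - g t • x'‖ ^ 2 / (2 * r t ^ 2)) ∂ν)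
      (∫ x', exp (-‖x - g t • x'‖ ^ 2 / (2 * r t ^ 2)) *
        (gdot t * ⟪x - g t • x', x'⟫ / r t ^ 2 + rdot t * ‖x - g t • x'‖ ^ 2 / r t ^ 3) ∂ν)
      (Set.Icc 0 T) t := by
  obtain ⟨h1, h2, h3⟩ := aux_param hν (aux_F x)
  have hgC := aux_contDiffOn hT hg hgdot
  have hrC := aux_contDiffOn hT hr hrdot
  have hne : ∀ t ∈ Set.Icc (0 : ℝ) T, 2 * r t ^ 2 ≠ 0 := fun t ht => by
    have := hrpos t ht
    positivity
  have hpC : ContDiffOn ℝ 1 (fun t => (g t, (2 * r t ^ 2)⁻¹)) (Set.Icc 0 T) :=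
    hgC.prodMk ((contDiffOn_const.mul (hrC.pow 2)).inv hne)
  have hfun : (fun t => ∫ x', exp (-‖x - g t • x'‖ ^ 2 / (2 * r t ^ 2)) ∂ν) =
      (fun p : ℝ × ℝ => ∫ x', exp (-‖x - p.1 • x'‖ ^ 2 * p.2) ∂ν) ∘
        (fun t => (g t, (2 * r t ^ 2)⁻¹)) := by
    funext t
    simp only [Function.comp, div_eq_mul_inv]
  rw [hfun]
  clear hfun
  refine ⟨h2.comp_contDiffOn hpC, fun t ht => ?_⟩
  have hp := (hpC.differentiableOn one_ne_zero t ht).hasDerivWithinAt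
  refine ((h1 _).comp_hasDerivWithinAt t hp).congr_deriv ?_
  rw [ContinuousLinearMap.integral_apply (h3 _)]
  congr 1
  ext1 x'
  have hF : HasFDerivAt (fun p : ℝ × ℝ => exp (-‖x - p.1 • x'‖ ^ 2 * p.2))
      (fderiv ℝ (fun p : ℝ × ℝ => exp (-‖x - p.1 • x'‖ ^ 2 * p.2)) (g t, (2 * r t ^ 2)⁻¹))
      (g t, (2 * r t ^ 2)⁻¹) := by
    have h5 : ContDiff ℝ 1 (fun p : ℝ × ℝ => exp (-‖x - p.1 • x'‖ ^ 2 * p.2)) := aux_F' x x'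
    exact (h5.differentiable one_ne_zero _).hasFDerivAt
  have h6 := hF.comp_hasDerivWithinAt t hp
  have hfun2 : (fun p : ℝ × ℝ => exp (-‖x - p.1 • x'‖ ^ 2 * p.2)) ∘
        (fun t => (g t, (2 * r t ^ 2)⁻¹)) =
        fun t => exp (-‖x - g t • x'‖ ^ 2 / (2 * r t ^ 2)) := by
    funext t
    simp only [Function.comp, div_eq_mul_inv]
  rw [hfun2] at h6
  exact (uniqueDiffOn_Icc hT t ht).eq_deriv _ h6
    (aux_kt T x x' g r _ _ t (hg t ht) (hr t ht) (hrpos t ht))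

theorem aux_K (R γ : ℝ) : ContDiff ℝ 1 (Function.uncurry fun (y x' : EuclideanSpace ℝ (Fin d)) =>
      exp (-‖y - γ • x'‖ ^ 2 / (2 * R ^ 2))) := by
  have : ContDiff ℝ 1 (fun q : EuclideanSpace ℝ (Fin d) × EuclideanSpace ℝ (Fin d) =>
      ‖q.1 - γ • q.2‖ ^ 2) :=
    ContDiff.norm_sq ℝ (by fun_prop)
  unfold Function.uncurry
  fun_prop

theorem aux_grad (hν : ∃ K : Set (EuclideanSpace ℝ (Fin d)), IsCompact K ∧ ν Kᶜ = 0)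
    (R γ : ℝ) (y : EuclideanSpace ℝ (Fin d)) :
    HasGradientAt (fun y => ∫ x', exp (-‖y - γ • x'‖ ^ 2 / (2 * R ^ 2)) ∂ν)
      (∫ x', -(exp (-‖y - γ • x'‖ ^ 2 / (2 * R ^ 2)) / R ^ 2) • (y - γ • x') ∂ν) y := by
  obtain ⟨h1, -, -⟩ := aux_param hν (aux_K (d := d) R γ)
  rw [hasGradientAt_iff_hasFDerivAt]
  refine (h1 y).congr_fderiv ?_
  have hc : Continuous fun x' : EuclideanSpace ℝ (Fin d) =>
      -(exp (-‖y - γ • x'‖ ^ 2 / (2 * R ^ 2)) / R ^ 2) • (y - γ • x') := by fun_prop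
  have := (InnerProductSpace.toDual ℝ (EuclideanSpace ℝ (Fin d))).toContinuousLinearEquiv.toContinuousLinearMap.integral_comp_comm
    (aux_integrable hν hc)
  refine Eq.trans ?_ this
  congr 1
  ext1 x'
  rw [(aux_k R γ x' y).fderiv]
  ext v
  simp

/-- the flux integrand -/
noncomputable def auxPhi (R γ κ a c : ℝ) (y x' : EuclideanSpace ℝ (Fin d)) :
    EuclideanSpace ℝ (Fin d) :=
  (κ * exp (-‖y - γ • x'‖ ^ 2 / (2 * R ^ 2))) • (a • x' + c • (y - γ • x'))

theorem aux_Phi_contDiff (R γ κ a c : ℝ) :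
    ContDiff ℝ 1 (Function.uncurry (auxPhi (d := d) R γ κ a c)) := by
  have := aux_K (d := d) R γ
  unfold Function.uncurry at *
  unfold auxPhi
  fun_prop

theorem aux_Phi_div (R γ κ a c : ℝ) (y x' : EuclideanSpace ℝ (Fin d)) :
    ∑ i, fderiv ℝ (fun y => auxPhi R γ κ a c y x') y (EuclideanSpace.single i 1) i =
      κ * exp (-‖y - γ • x'‖ ^ 2 / (2 * R ^ 2)) *
        (d * c - (a * ⟪y - γ • x', x'⟫ + c * ‖y - γ • x'‖ ^ 2) / R ^ 2) := by
  have h1 : HasFDerivAt (fun y => a • x' + c • (y - γ • x'))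
      (c • ContinuousLinearMap.id ℝ (EuclideanSpace ℝ (Fin d))) y :=
    (((hasFDerivAt_id y).sub_const _).const_smul c).const_add _
  have h2 := ((aux_k R γ x' y).const_mul κ).smul h1
  have h3 : HasFDerivAt (fun y => auxPhi R γ κ a c y x') _ y := h2
  rw [h3.fderiv, ← real_inner_self_eq_norm_sq]
  generalize hw : y - γ • x' = w
  have e1 : ⟪w, x'⟫ = ∑ i, w i * x' i := by simp [PiLp.inner_apply, mul_comm]
  have e2 : ⟪w, w⟫ = ∑ i, w i * w i := by simp only [PiLp.inner_apply]; simp [sq]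
  rw [e1, e2]
  generalize exp (-⟪w, w⟫ / (2 * R ^ 2)) = k
  have e3 : ∀ i : Fin d, ⟪w, EuclideanSpace.single i (1 : ℝ)⟫ = w i := fun i => by
    simp [EuclideanSpace.inner_single_right]
  simp [e3]
  have e4 : (d : ℝ) * c = ∑ i : Fin d, c := by simp
  rw [e4, Finset.mul_sum, Finset.mul_sum, ← Finset.sum_add_distrib, Finset.sum_div,
    ← Finset.sum_sub_distrib, Finset.mul_sum]
  refine Finset.sum_congr rfl fun i _ => ?_
  ring

theorem aux_div (hν : ∃ K : Set (EuclideanSpace ℝ (Fin d)), IsCompact K ∧ ν Kᶜ = 0)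
    (R γ κ a c : ℝ) (y : EuclideanSpace ℝ (Fin d)) :
    diverg (fun y => ∫ x', auxPhi R γ κ a c y x' ∂ν) y =
      ∫ x', κ * exp (-‖y - γ • x'‖ ^ 2 / (2 * R ^ 2)) *
        (d * c - (a * ⟪y - γ • x', x'⟫ + c * ‖y - γ • x'‖ ^ 2) / R ^ 2) ∂ν := by
  obtain ⟨h1, -, h3⟩ := aux_param hν (aux_Phi_contDiff (d := d) R γ κ a c)
  unfold diverg
  rw [(h1 y).fderiv]
  simp_rw [← aux_Phi_div]
  have h4 : ∀ i : Fin d, Integrable (fun x' =>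
      fderiv ℝ (fun y => auxPhi R γ κ a c y x') y (EuclideanSpace.single i 1)) ν :=
    fun i => (h3 y).apply_continuousLinearMap _
  rw [integral_finsetSum]
  · refine Finset.sum_congr rfl fun i _ => ?_
    rw [ContinuousLinearMap.integral_apply (h3 y)]
    exact ((EuclideanSpace.proj  i : EuclideanSpace ℝ (Fin d) →L[ℝ] ℝ).integral_comp_comm (h4 i)).symm
  · intro i _
    exact (EuclideanSpace.proj  i : EuclideanSpace ℝ (Fin d) →L[ℝ] ℝ).integrable_comp (h4 i)

theorem aux_kappa {T t : ℝ} {r : ℝ → ℝ} {r' : ℝ} (p : ℝ)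
    (hr : HasDerivWithinAt r r' (Set.Icc 0 T) t) (hr0 : 0 < r t) :
    HasDerivWithinAt (fun t => (2 * π * r t ^ 2) ^ p)
      (2 * p * r' / r t * (2 * π * r t ^ 2) ^ p) (Set.Icc 0 T) t := by
  have hpos : 0 < 2 * π * r t ^ 2 := by positivity
  have h := ((hr.fun_pow 2).const_mul (2 * π)).rpow_const (p := p) (Or.inl hpos.ne')
  refine h.congr_deriv ?_
  rw [Real.rpow_sub_one hpos.ne']
  generalize (2 * π * r t ^ 2) ^ p = q
  have := pi_pos.ne'
  simp
  field_simp

theorem aux_flux (hν : ∃ K : Set (EuclideanSpace ℝ (Fin d)), IsCompact K ∧ ν Kᶜ = 0)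
    (R γ κ a R' : ℝ) (hR : 0 < R) (hκ : 0 < κ) (y : EuclideanSpace ℝ (Fin d)) :
    (κ * ∫ x', exp (-‖y - γ • x'‖ ^ 2 / (2 * R ^ 2)) ∂ν) •
      (a • ((∫ x', exp (-‖y - γ • x'‖ ^ 2 / (2 * R ^ 2)) ∂ν)⁻¹ •
        ∫ x', exp (-‖y - γ • x'‖ ^ 2 / (2 * R ^ 2)) • x' ∂ν) -
      (R * R') • gradient (fun y => log (κ * ∫ x', exp (-‖y - γ • x'‖ ^ 2 / (2 * R ^ 2)) ∂ν)) y) =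
    ∫ x', auxPhi R γ κ a (R' / R) y x' ∂ν := by
  have hcH : Continuous fun x' : EuclideanSpace ℝ (Fin d) =>
      exp (-‖y - γ • x'‖ ^ 2 / (2 * R ^ 2)) := by fun_prop
  have hH : 0 < ∫ x', exp (-‖y - γ • x'‖ ^ 2 / (2 * R ^ 2)) ∂ν :=
    integral_exp_pos (aux_integrable hν hcH)
  have hV : Continuous fun x' : EuclideanSpace ℝ (Fin d) =>
      exp (-‖y - γ • x'‖ ^ 2 / (2 * R ^ 2)) • x' := by fun_prop
  have hG : Continuous fun x' : EuclideanSpace ℝ (Fin d) =>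
      -(exp (-‖y - γ • x'‖ ^ 2 / (2 * R ^ 2)) / R ^ 2) • (y - γ • x') := by fun_prop
  have h1 := (aux_grad hν R γ y)
  rw [hasGradientAt_iff_hasFDerivAt] at h1
  have h2 := (h1.const_mul κ).log (by positivity)
  rw [← map_smul, ← map_smul, ← hasGradientAt_iff_hasFDerivAt] at h2
  rw [h2.gradient]
  have e1 : ∫ x', auxPhi R γ κ a (R' / R) y x' ∂ν =
      (κ * a) • (∫ x', exp (-‖y - γ • x'‖ ^ 2 / (2 * R ^ 2)) • x' ∂ν) - (κ * R * R') •
      ∫ x', -(exp (-‖y - γ • x'‖ ^ 2 / (2 * R ^ 2)) / R ^ 2) • (y - γ • x') ∂ν := by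
    rw [← integral_smul, ← integral_smul, ← integral_sub]
    · congr 1
      ext1 x'
      unfold auxPhi
      generalize exp (-‖y - γ • x'‖ ^ 2 / (2 * R ^ 2)) = k
      generalize y - γ • x' = w
      rw [smul_add, smul_smul, smul_smul, smul_smul, smul_smul, sub_eq_add_neg, ← neg_smul]
      congr 2 <;> field_simp
    · exact aux_integrable hν (hV.const_smul (κ * a))
    · exact aux_integrable hν (hG.const_smul (κ * R * R'))
  rw [e1]
  revert hH
  generalize (∫ x', exp (-‖y - γ • x'‖ ^ 2 / (2 * R ^ 2)) ∂ν) = H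
  intro hH
  rw [smul_sub]
  simp only [smul_smul]
  congr 2 <;> field_simp

end helpers

/-- the interpolant density satisfies the continuity equation
`∂_t ρ + div(bρ) = 0` with drift `b = ġ m − r ṙ s` (first assertion of Lemma 1). -/
theorem stmt_5 {d : ℕ} (hd : 1 ≤ d) (T : ℝ) (hT : 0 < T)
    (ν : Measure (EuclideanSpace ℝ (Fin d))) [IsProbabilityMeasure ν]
    (hν : ∃ K : Set (EuclideanSpace ℝ (Fin d)), IsCompact K ∧ ν Kᶜ = 0)
    (g r gdot rdot : ℝ → ℝ)
    (hg : ∀ t ∈ Set.Icc (0 : ℝ) T, HasDerivWithinAt g (gdot t) (Set.Icc 0 T) t)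
    (hr : ∀ t ∈ Set.Icc (0 : ℝ) T, HasDerivWithinAt r (rdot t) (Set.Icc 0 T) t)
    (hgdot : ContinuousOn gdot (Set.Icc 0 T)) (hrdot : ContinuousOn rdot (Set.Icc 0 T))
    (hrpos : ∀ t ∈ Set.Icc (0 : ℝ) T, 0 < r t)
    (ρ : ℝ → EuclideanSpace ℝ (Fin d) → ℝ)
    (hρ : ∀ t x, ρ t x = (2 * π * r t ^ 2) ^ (-(d : ℝ) / 2) *
      ∫ x', exp (-‖x - g t • x'‖ ^ 2 / (2 * r t ^ 2)) ∂ν)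
    (m : ℝ → EuclideanSpace ℝ (Fin d) → EuclideanSpace ℝ (Fin d))
    (hm : ∀ t x, m t x = (∫ x', exp (-‖x - g t • x'‖ ^ 2 / (2 * r t ^ 2)) ∂ν)⁻¹ •
      ∫ x', exp (-‖x - g t • x'‖ ^ 2 / (2 * r t ^ 2)) • x' ∂ν)
    (s : ℝ → EuclideanSpace ℝ (Fin d) → EuclideanSpace ℝ (Fin d))
    (hs : ∀ t x, s t x = gradient (fun y => log (ρ t y)) x)
    (b : ℝ → EuclideanSpace ℝ (Fin d) → EuclideanSpace ℝ (Fin d))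
    (hb : ∀ t x, b t x = gdot t • m t x - (r t * rdot t) • s t x) :
    (∀ x, ContDiffOn ℝ 1 (fun t => ρ t x) (Set.Icc 0 T)) ∧
    (∀ t ∈ Set.Icc (0 : ℝ) T, ContDiff ℝ 1 (fun y => ρ t y • b t y)) ∧
    (∀ t ∈ Set.Icc (0 : ℝ) T, ∀ x,
      derivWithin (fun τ => ρ τ x) (Set.Icc 0 T) t +
        diverg (fun y => ρ t y • b t y) x = 0) := by
  have hκ : ∀ t ∈ Set.Icc (0 : ℝ) T, 0 < (2 * π * r t ^ 2) ^ (-(d : ℝ) / 2) := fun t ht => by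
    have := hrpos t ht
    positivity
  have hflux : ∀ t ∈ Set.Icc (0 : ℝ) T, (fun y => ρ t y • b t y) = fun y =>
      ∫ x', auxPhi (r t) (g t) ((2 * π * r t ^ 2) ^ (-(d : ℝ) / 2)) (gdot t)
        (rdot t / r t) y x' ∂ν := by
    intro t ht
    funext y
    rw [← aux_flux hν _ _ _ _ _ (hrpos t ht) (hκ t ht), hb, hs, hm]
    simp only [hρ]
  have htime := fun x => aux_time hν hT hg hr hgdot hrdot hrpos x
  refine ⟨fun x => ?_, fun t ht => ?_, fun t ht x => ?_⟩
  · simp only [hρ]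
    refine ContDiffOn.mul ?_ (htime x).1
    have hrC := aux_contDiffOn hT hr hrdot
    refine (contDiffOn_const.mul (hrC.pow 2)).rpow_const_of_ne fun t ht => ?_
    have := hrpos t ht
    positivity
  · rw [hflux t ht]
    exact (aux_param hν (aux_Phi_contDiff _ _ _ _ _)).2.1
  · rw [hflux t ht, aux_div hν]
    simp only [hρ]
    have hr0 := hrpos t ht
    have h1 := (aux_kappa (-(d : ℝ) / 2) (hr t ht) hr0).mul ((htime x).2 t ht)
    have h2 := h1.derivWithin (uniqueDiffOn_Icc hT t ht)
    refine (congrArg (· + _) h2).trans ?_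
    rw [← integral_const_mul, ← integral_const_mul, ← integral_add, ← integral_add]
    · refine integral_eq_zero_of_ae (Filter.Eventually.of_forall fun x' => ?_)
      simp only [Pi.zero_apply]
      generalize exp (-‖x - g t • x'‖ ^ 2 / (2 * r t ^ 2)) = k
      generalize (2 * π * r t ^ 2) ^ (-(d : ℝ) / 2) = κ
      field_simp
      ring
    all_goals exact aux_integrable hν (by fun_prop)
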